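/- Let m, c, k, ω be positive reals with 0 < m²·ω⁴ + (3c² − 4k·m)·ω² + 3k², set s = iω, and let z₁, z₂ : ℝ → ℂ. Assume: z₁ and z₂ are twice differentiable with continuous first and second derivatives on [0,∞); z₁, z₁', z₂, z₂', z₂'' are all of exponential order a for some real a with a < 0; z₁(0) = 0, z₂(0) = 0 and z₂'(0) = 0; the differential equation z₂''(t) + (2c/m)·z₂'(t) + (2k/m)·z₂(t) = (c/m)·z₁'(t) + (k/m)·z₁(t) holds for all t ≥ 0; and L[z₁](s) ≠ 0. Then ‖L[z₂](s) / L[z₁](s)‖ < 1, i.e., the platoon with autonomous bidirectional constant-spacing controller is stable at frequency ω. -/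

import Mathlib

open MeasureTheory

/-- The Laplace transform of `f : ℝ → ℂ` at `s : ℂ`:  `∫ t in (0,∞), e^{-s t} f t`. -/
noncomputable def laplace (f : ℝ → ℂ) (s : ℂ) : ℂ :=
  ∫ t in Set.Ioi (0 : ℝ), Complex.exp (-(s * t)) * f t

/-- `f` is of exponential order `a`: there is `M > 0` with `‖f t‖ ≤ M e^{a t}` for `t ≥ 0`. -/
def ExpOrder (f : ℝ → ℂ) (a : ℝ) : Prop :=
  ∃ M > 0, ∀ t ≥ (0 : ℝ), ‖f t‖ ≤ M * Real.exp (a * t)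

/-!
Taking Laplace transforms of the differential equation with zero initial data gives
`(s² + 2N) L[z₂](s) = N L[z₁](s)` with `N = (c s + k) / m`. For `s = iω ≠ 0` the factor `s² + 2N`
does not vanish: otherwise `N L[z₁](s) = 0`, so `N = 0` and then `s² = 0`. Hence the frequency
response is `N / (s² + 2N)`, and its modulus is below `1` exactly when
`m² (|s² + 2N|² - |N|²) = m² ω⁴ + (3c² - 4km) ω² + 3k²` is positive.
-/

open Complex Filter Set Topology

/-- Absolute convergence of the integral defining `laplace f s`. Where it fails, `laplace f s` has
the junk value `0`. -/
def LaplaceIntegrable (f : ℝ → ℂ) (s : ℂ) : Prop :=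
  IntegrableOn (fun t : ℝ => cexp (-(s * t)) * f t) (Ioi 0)

section Laplace

variable {f g f' : ℝ → ℂ} {s : ℂ}

theorem norm_cexp_neg_mul_ofReal (s : ℂ) (t : ℝ) : ‖cexp (-(s * t))‖ = Real.exp (-s.re * t) := by
  simp [Complex.norm_exp]

theorem ExpOrder.laplaceIntegrable {a : ℝ} (hf : ExpOrder f a) (ha : a < s.re)
    (hmeas : AEStronglyMeasurable f (volume.restrict (Ioi 0))) : LaplaceIntegrable f s := by
  obtain ⟨M, -, hM⟩ := hf
  have hbound : IntegrableOn (fun t : ℝ => M * Real.exp ((a - s.re) * t)) (Ioi 0) :=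
    (integrableOn_exp_mul_Ioi (sub_neg.2 ha) 0).const_mul M
  have hexp : Continuous fun t : ℝ => cexp (-(s * t)) := by fun_prop
  refine hbound.mono' (hexp.aestronglyMeasurable.mul hmeas) ?_
  filter_upwards [ae_restrict_mem measurableSet_Ioi] with t ht
  calc ‖cexp (-(s * t)) * f t‖ = Real.exp (-s.re * t) * ‖f t‖ := by
        rw [norm_mul, norm_cexp_neg_mul_ofReal]
    _ ≤ Real.exp (-s.re * t) * (M * Real.exp (a * t)) := by gcongr; exact hM t (le_of_lt ht)
    _ = M * Real.exp ((a - s.re) * t) := by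
        rw [mul_left_comm, ← Real.exp_add]
        ring_nf

theorem ExpOrder.laplaceIntegrable_of_continuousOn {a : ℝ} (hf : ExpOrder f a) (ha : a < s.re)
    (hcont : ContinuousOn f (Ici 0)) : LaplaceIntegrable f s :=
  hf.laplaceIntegrable ha
    ((hcont.mono Ioi_subset_Ici_self).aestronglyMeasurable measurableSet_Ioi)

theorem LaplaceIntegrable.add (hf : LaplaceIntegrable f s) (hg : LaplaceIntegrable g s) :
    LaplaceIntegrable (fun t => f t + g t) s := by
  simpa only [LaplaceIntegrable, IntegrableOn, mul_add] using Integrable.fun_add hf hg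

theorem LaplaceIntegrable.const_mul (hf : LaplaceIntegrable f s) (c : ℂ) :
    LaplaceIntegrable (fun t => c * f t) s := by
  simpa only [LaplaceIntegrable, IntegrableOn, mul_left_comm] using Integrable.const_mul hf c

theorem LaplaceIntegrable.congr (hf : LaplaceIntegrable f s) (h : EqOn f g (Ioi 0)) :
    LaplaceIntegrable g s :=
  IntegrableOn.congr_fun hf (fun t ht => by simp only [h ht]) measurableSet_Ioi

theorem laplace_add (hf : LaplaceIntegrable f s) (hg : LaplaceIntegrable g s) :
    laplace (fun t => f t + g t) s = laplace f s + laplace g s := by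
  simpa only [laplace, mul_add] using integral_add hf hg

theorem laplace_const_mul (c : ℂ) (f : ℝ → ℂ) (s : ℂ) :
    laplace (fun t => c * f t) s = c * laplace f s := by
  simp only [laplace, mul_left_comm _ c, integral_const_mul]

theorem laplace_congr (h : EqOn f g (Ioi 0)) : laplace f s = laplace g s :=
  setIntegral_congr_fun measurableSet_Ioi fun t ht => by simp only [h ht]

theorem hasDerivAt_cexp_neg_mul_ofReal (s : ℂ) (t : ℝ) :
    HasDerivAt (fun t : ℝ => cexp (-(s * t))) (cexp (-(s * t)) * -s) t := by
  simpa using ((ofRealCLM.hasDerivAt (x := t)).const_mul s).neg.cexp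

theorem laplace_of_hasDerivAt (hcont : ContinuousWithinAt f (Ici 0) 0)
    (hderiv : ∀ t ∈ Ioi (0 : ℝ), HasDerivAt f (f' t) t)
    (hf : LaplaceIntegrable f s) (hf' : LaplaceIntegrable f' s) :
    laplace f' s = s * laplace f s - f 0 := by
  let F : ℝ → ℂ := fun t => cexp (-(s * t)) * f t
  let F' : ℝ → ℂ := fun t => cexp (-(s * t)) * f' t - s * (cexp (-(s * t)) * f t)
  have hF : ∀ t ∈ Ioi (0 : ℝ), HasDerivAt F (F' t) t := fun t ht =>
    ((hasDerivAt_cexp_neg_mul_ofReal s t).mul (hderiv t ht)).congr_deriv (by simp only [F']; ring)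
  have hF_cont : ContinuousWithinAt F (Ici 0) 0 :=
    (hasDerivAt_cexp_neg_mul_ofReal s 0).continuousAt.continuousWithinAt.mul hcont
  have hF'_int : IntegrableOn F' (Ioi 0) := Integrable.sub hf' (Integrable.const_mul hf s)
  have hF_lim : Tendsto F atTop (𝓝 0) :=
    tendsto_zero_of_hasDerivAt_of_integrableOn_Ioi hF hF'_int hf
  have hFTC : ∫ t in Ioi 0, F' t = 0 - F 0 :=
    integral_Ioi_of_hasDerivAt_of_tendsto hF_cont hF hF'_int hF_lim
  have hsplit : ∫ t in Ioi 0, F' t = laplace f' s - s * laplace f s := by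
    simp only [F', laplace]
    rw [integral_sub hf' (Integrable.const_mul hf s), integral_const_mul]
  have hF_zero : F 0 = f 0 := by simp [F]
  linear_combination hFTC - hsplit - hF_zero

theorem laplace_of_hasDerivWithinAt_Ici
    (hderiv : ∀ t ∈ Ici (0 : ℝ), HasDerivWithinAt f (f' t) (Ici 0) t)
    (hf : LaplaceIntegrable f s) (hf' : LaplaceIntegrable f' s) :
    laplace f' s = s * laplace f s - f 0 :=
  laplace_of_hasDerivAt (hderiv 0 self_mem_Ici).continuousWithinAt
    (fun t ht => (hderiv t (Ioi_subset_Ici_self ht)).hasDerivAt (Ici_mem_nhds ht)) hf hf'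

theorem quadratic_mul_laplace_eq_of_ode {f'' g' : ℝ → ℂ} {p q u v : ℂ}
    (hdf : ∀ t ∈ Ici (0 : ℝ), HasDerivWithinAt f (f' t) (Ici 0) t)
    (hdf' : ∀ t ∈ Ici (0 : ℝ), HasDerivWithinAt f' (f'' t) (Ici 0) t)
    (hdg : ∀ t ∈ Ici (0 : ℝ), HasDerivWithinAt g (g' t) (Ici 0) t)
    (hf : LaplaceIntegrable f s) (hf' : LaplaceIntegrable f' s)
    (hg : LaplaceIntegrable g s) (hg' : LaplaceIntegrable g' s)
    (hf₀ : f 0 = 0) (hf'₀ : f' 0 = 0) (hg₀ : g 0 = 0)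
    (hode : ∀ t > 0, f'' t + p * f' t + q * f t = u * g' t + v * g t) :
    (s ^ 2 + p * s + q) * laplace f s = (u * s + v) * laplace g s := by
  have hrhs := (hg'.const_mul u).add (hg.const_mul v)
  have hf'' : LaplaceIntegrable f'' s :=
    ((hrhs.add (hf'.const_mul (-p))).add (hf.const_mul (-q))).congr fun t ht => by
      linear_combination -hode t ht
  have htransform : laplace f'' s + p * laplace f' s + q * laplace f s
      = u * laplace g' s + v * laplace g s := by
    simpa only [laplace_add (hf''.add (hf'.const_mul p)) (hf.const_mul q),
      laplace_add hf'' (hf'.const_mul p), laplace_add (hg'.const_mul u) (hg.const_mul v),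
      laplace_const_mul] using laplace_congr (s := s) hode
  have hLf : laplace f' s = s * laplace f s := by
    rw [laplace_of_hasDerivWithinAt_Ici hdf hf hf', hf₀, sub_zero]
  have hLf' : laplace f'' s = s * laplace f' s := by
    rw [laplace_of_hasDerivWithinAt_Ici hdf' hf' hf'', hf'₀, sub_zero]
  have hLg : laplace g' s = s * laplace g s := by
    rw [laplace_of_hasDerivWithinAt_Ici hdg hg hg', hg₀, sub_zero]
  rw [hLf', hLf, hLg] at htransform
  linear_combination htransform

end Laplace

theorem norm_div_lt_one_iff_of_mul_eq_mul {K : Type*} [NormedField K] {A B N D : K} (hA : A ≠ 0)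
    (hD : D ≠ 0) (h : D * B = N * A) : ‖B / A‖ < 1 ↔ ‖N‖ < ‖D‖ := by
  have hratio : B / A = N / D := by
    rw [div_eq_div_iff hA hD, mul_comm B, h]
  rw [hratio, norm_div, div_lt_one (norm_pos_iff.2 hD)]

/-- Numerator of the transfer function `L[z₂](s) / L[z₁](s)` of the platoon, normalized so that
`transferDen` is monic. -/
noncomputable def transferNum (m c k : ℝ) (s : ℂ) : ℂ :=
  ((c / m : ℝ) : ℂ) * s + ((k / m : ℝ) : ℂ)

/-- Denominator of the transfer function `L[z₂](s) / L[z₁](s)` of the platoon, normalized to be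
monic: it is the characteristic polynomial of the differential equation for `z₂`. -/
noncomputable def transferDen (m c k : ℝ) (s : ℂ) : ℂ :=
  s ^ 2 + ((2 * c / m : ℝ) : ℂ) * s + ((2 * k / m : ℝ) : ℂ)

theorem transferDen_eq_sq_add_two_mul_transferNum (m c k : ℝ) (s : ℂ) :
    transferDen m c k s = s ^ 2 + 2 * transferNum m c k s := by
  simp only [transferDen, transferNum]
  push_cast
  ring

theorem sq_norm_transferDen_sub_sq_norm_transferNum {m : ℝ} (hm : m ≠ 0) (c k ω : ℝ) :
    ‖transferDen m c k (I * ω)‖ ^ 2 - ‖transferNum m c k (I * ω)‖ ^ 2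
      = (m ^ 2 * ω ^ 4 + (3 * c ^ 2 - 4 * k * m) * ω ^ 2 + 3 * k ^ 2) / m ^ 2 := by
  have hden : transferDen m c k (I * ω) = ⟨2 * k / m - ω ^ 2, 2 * c / m * ω⟩ := by
    rw [transferDen, Complex.mk_eq_add_mul_I]
    push_cast
    linear_combination (ω : ℂ) ^ 2 * I_sq
  have hnum : transferNum m c k (I * ω) = ⟨k / m, c / m * ω⟩ := by
    apply Complex.ext <;> simp [transferNum]
  rw [hden, hnum, Complex.sq_norm, Complex.sq_norm, normSq_mk, normSq_mk]
  field_simp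
  ring

theorem norm_transferNum_lt_norm_transferDen_iff {m : ℝ} (hm : m ≠ 0) (c k ω : ℝ) :
    ‖transferNum m c k (I * ω)‖ < ‖transferDen m c k (I * ω)‖
      ↔ 0 < m ^ 2 * ω ^ 4 + (3 * c ^ 2 - 4 * k * m) * ω ^ 2 + 3 * k ^ 2 := by
  rw [← sq_lt_sq₀ (norm_nonneg _) (norm_nonneg _), ← sub_pos,
    sq_norm_transferDen_sub_sq_norm_transferNum hm, div_pos_iff_of_pos_right (by positivity)]

theorem stmt11_general {m c k ω : ℝ} (hm : m ≠ 0) (hω : ω ≠ 0) {z₁ z₂ z₁' z₂' z₂'' : ℝ → ℂ}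
    (hdz₁ : ∀ t ∈ Ici (0 : ℝ), HasDerivWithinAt z₁ (z₁' t) (Ici 0) t)
    (hdz₂ : ∀ t ∈ Ici (0 : ℝ), HasDerivWithinAt z₂ (z₂' t) (Ici 0) t)
    (hdz₂' : ∀ t ∈ Ici (0 : ℝ), HasDerivWithinAt z₂' (z₂'' t) (Ici 0) t)
    (hiz₁ : LaplaceIntegrable z₁ (I * ω)) (hiz₁' : LaplaceIntegrable z₁' (I * ω))
    (hiz₂ : LaplaceIntegrable z₂ (I * ω)) (hiz₂' : LaplaceIntegrable z₂' (I * ω))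
    (hinit₁ : z₁ 0 = 0) (hinit₂ : z₂ 0 = 0) (hinit₂' : z₂' 0 = 0)
    (hode : ∀ t > 0,
      z₂'' t + ((2 * c / m : ℝ) : ℂ) * z₂' t + ((2 * k / m : ℝ) : ℂ) * z₂ t
        = ((c / m : ℝ) : ℂ) * z₁' t + ((k / m : ℝ) : ℂ) * z₁ t)
    (hL : laplace z₁ (I * ω) ≠ 0) :
    ‖laplace z₂ (I * ω) / laplace z₁ (I * ω)‖ < 1
      ↔ 0 < m ^ 2 * ω ^ 4 + (3 * c ^ 2 - 4 * k * m) * ω ^ 2 + 3 * k ^ 2 := by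
  have htransfer : transferDen m c k (I * ω) * laplace z₂ (I * ω)
      = transferNum m c k (I * ω) * laplace z₁ (I * ω) :=
    quadratic_mul_laplace_eq_of_ode hdz₂ hdz₂' hdz₁ hiz₂ hiz₂' hiz₁ hiz₁' hinit₂ hinit₂' hinit₁ hode
  have hden : transferDen m c k (I * ω) ≠ 0 := by
    intro hden
    have hnum : transferNum m c k (I * ω) = 0 := by
      rw [hden, zero_mul] at htransfer
      exact (mul_eq_zero.1 htransfer.symm).resolve_right hL
    have hsq : (I * (ω : ℂ)) ^ 2 = 0 := by
      simpa [hden, hnum] using (transferDen_eq_sq_add_two_mul_transferNum m c k (I * ω)).symm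
    simp [hω] at hsq
  rw [norm_div_lt_one_iff_of_mul_eq_mul hL hden htransfer,
    norm_transferNum_lt_norm_transferDen_iff hm]

theorem stmt11 (m c k ω : ℝ) (hm : 0 < m) (hc : 0 < c) (hk : 0 < k) (hω : 0 < ω)
    (hfreq : 0 < m ^ 2 * ω ^ 4 + (3 * c ^ 2 - 4 * k * m) * ω ^ 2 + 3 * k ^ 2)
    (s : ℂ) (hs : s = Complex.I * (ω : ℂ)) (a : ℝ) (ha : a < 0)
    (z₁ z₂ z₁' z₁'' z₂' z₂'' : ℝ → ℂ)
    (hdz₁ : ∀ t ∈ Set.Ici (0 : ℝ), HasDerivWithinAt z₁ (z₁' t) (Set.Ici 0) t)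
    (hdz₁' : ∀ t ∈ Set.Ici (0 : ℝ), HasDerivWithinAt z₁' (z₁'' t) (Set.Ici 0) t)
    (hdz₂ : ∀ t ∈ Set.Ici (0 : ℝ), HasDerivWithinAt z₂ (z₂' t) (Set.Ici 0) t)
    (hdz₂' : ∀ t ∈ Set.Ici (0 : ℝ), HasDerivWithinAt z₂' (z₂'' t) (Set.Ici 0) t)
    (hcz₁' : ContinuousOn z₁' (Set.Ici 0)) (hcz₁'' : ContinuousOn z₁'' (Set.Ici 0))
    (hcz₂' : ContinuousOn z₂' (Set.Ici 0)) (hcz₂'' : ContinuousOn z₂'' (Set.Ici 0))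
    (hez₁ : ExpOrder z₁ a) (hez₁' : ExpOrder z₁' a)
    (hez₂ : ExpOrder z₂ a) (hez₂' : ExpOrder z₂' a) (hez₂'' : ExpOrder z₂'' a)
    (hinit₁ : z₁ 0 = 0) (hinit₂ : z₂ 0 = 0) (hinit₂' : z₂' 0 = 0)
    (hode : ∀ t ≥ (0 : ℝ),
      z₂'' t + ((2 * c / m : ℝ) : ℂ) * z₂' t + ((2 * k / m : ℝ) : ℂ) * z₂ t
        = ((c / m : ℝ) : ℂ) * z₁' t + ((k / m : ℝ) : ℂ) * z₁ t)
    (hL : laplace z₁ s ≠ 0) :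
    ‖laplace z₂ s / laplace z₁ s‖ < 1 := by
  subst hs
  have hre : a < (I * ω).re := by simpa using ha
  exact (stmt11_general hm.ne' hω.ne' hdz₁ hdz₂ hdz₂'
    (hez₁.laplaceIntegrable_of_continuousOn hre (HasDerivWithinAt.continuousOn hdz₁))
    (hez₁'.laplaceIntegrable_of_continuousOn hre hcz₁')
    (hez₂.laplaceIntegrable_of_continuousOn hre (HasDerivWithinAt.continuousOn hdz₂))
    (hez₂'.laplaceIntegrable_of_continuousOn hre hcz₂')
    hinit₁ hinit₂ hinit₂' (fun t ht => hode t (le_of_lt ht)) hL).2 hfreq
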